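/- If (y, z) is an integer feasible solution of (CP1), then (y, r) with r = Σ_{k=1}^K z^k is an integer feasible solution of (CP2). -/

import Mathlib

open Finset
open scoped Classical

noncomputable section

/-- Radius of a nonempty set `S` of open facilities: the largest, over clients `i`,
of the distance from `i` to the closest facility in `S`. -/
def radius {N M : ℕ} (hN : 0 < N) (d : Fin N → Fin M → ℝ)
    (S : Finset (Fin M)) (hS : S.Nonempty) : ℝ :=
  (univ : Finset (Fin N)).sup' ⟨⟨0, hN⟩, mem_univ _⟩ fun i => S.inf' hS fun j => d i j

/-- Optimal radius of the `p`-center problem. -/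
def opt {N M : ℕ} (hN : 0 < N) (d : Fin N → Fin M → ℝ) (p : ℕ) : ℝ :=
  sInf { r | ∃ S : Finset (Fin M), ∃ hS : S.Nonempty, S.card ≤ p ∧ r = radius hN d S hS }

/-- Objective function `f(y, z) = D^0 + ∑_{k=1}^K (D^k - D^{k-1}) z^k`
(`z` is 0-indexed: entry `k : Fin K` stands for the paper's `z^{k+1}`). -/
def obj {K : ℕ} (D : Fin (K + 1) → ℝ) (z : Fin K → ℝ) : ℝ :=
  D 0 + ∑ k : Fin K, (D k.succ - D k.castSucc) * z k

/-- Ordering constraints `z^k ≥ z^{k+1}`, `k ∈ {1, …, K-1}` (0-indexed `z`). -/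
def Ordered {K : ℕ} (z : Fin K → ℝ) : Prop :=
  ∀ k : Fin K, ∀ h : (k : ℕ) + 1 < K, z ⟨(k : ℕ) + 1, h⟩ ≤ z k

/-- `ActiveIdx d D i k` says that the paper index `κ = k+1` belongs to `S_i ∪ {K}`:
either `κ ≤ K - 1` and some facility `j` satisfies `d i j = D^κ`, or `κ = K`. -/
def ActiveIdx {N M K : ℕ} (d : Fin N → Fin M → ℝ) (D : Fin (K + 1) → ℝ)
    (i : Fin N) (k : Fin K) : Prop :=
  ((k : ℕ) + 1 < K ∧ ∃ j, d i j = D k.succ) ∨ (k : ℕ) + 1 = K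

/-- LP-relaxed feasible set of formulation `(P2)`. -/
def FP2 {N M K : ℕ} (d : Fin N → Fin M → ℝ) (D : Fin (K + 1) → ℝ) (p : ℕ) :
    Set ((Fin M → ℝ) × (Fin K → ℝ)) :=
  { yz | (∀ j, 0 ≤ yz.1 j ∧ yz.1 j ≤ 1) ∧ (∀ k, 0 ≤ yz.2 k ∧ yz.2 k ≤ 1) ∧
    1 ≤ ∑ j, yz.1 j ∧ ∑ j, yz.1 j ≤ (p : ℝ) ∧
    ∀ i : Fin N, ∀ k : Fin K,
      1 ≤ yz.2 k + ∑ j ∈ univ.filter (fun j => d i j < D k.succ), yz.1 j }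

/-- LP-relaxed feasible set of formulation `(CP1)`. -/
def FCP1 {N M K : ℕ} (d : Fin N → Fin M → ℝ) (D : Fin (K + 1) → ℝ) (p : ℕ) :
    Set ((Fin M → ℝ) × (Fin K → ℝ)) :=
  { yz | (∀ j, 0 ≤ yz.1 j ∧ yz.1 j ≤ 1) ∧ (∀ k, 0 ≤ yz.2 k ∧ yz.2 k ≤ 1) ∧
    1 ≤ ∑ j, yz.1 j ∧ ∑ j, yz.1 j ≤ (p : ℝ) ∧ Ordered yz.2 ∧
    ∀ i : Fin N, ∀ k : Fin K, ActiveIdx d D i k →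
      1 ≤ yz.2 k + ∑ j ∈ univ.filter (fun j => d i j < D k.succ), yz.1 j }

/-- Integer feasible solutions of formulation `(CP1)`. -/
def CP1Int {N M K : ℕ} (d : Fin N → Fin M → ℝ) (D : Fin (K + 1) → ℝ) (p : ℕ) :
    Set ((Fin M → ℝ) × (Fin K → ℝ)) :=
  { yz | (∀ j, yz.1 j = 0 ∨ yz.1 j = 1) ∧ (∀ k, yz.2 k = 0 ∨ yz.2 k = 1) ∧
    1 ≤ ∑ j, yz.1 j ∧ ∑ j, yz.1 j ≤ (p : ℝ) ∧ Ordered yz.2 ∧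
    ∀ i : Fin N, ∀ k : Fin K, ActiveIdx d D i k →
      1 ≤ yz.2 k + ∑ j ∈ univ.filter (fun j => d i j < D k.succ), yz.1 j }

/-- LP-relaxed feasible set of formulation `(CP2)`. -/
def FCP2 {N M K : ℕ} (d : Fin N → Fin M → ℝ) (D : Fin (K + 1) → ℝ) (p : ℕ) :
    Set ((Fin M → ℝ) × ℝ) :=
  { yr | (∀ j, 0 ≤ yr.1 j ∧ yr.1 j ≤ 1) ∧ 0 ≤ yr.2 ∧ yr.2 ≤ (K : ℝ) ∧
    1 ≤ ∑ j, yr.1 j ∧ ∑ j, yr.1 j ≤ (p : ℝ) ∧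
    ∀ i : Fin N, ∀ k : Fin K, ActiveIdx d D i k →
      ((k : ℕ) + 1 : ℝ) ≤ yr.2 +
        ((k : ℕ) + 1 : ℝ) * ∑ j ∈ univ.filter (fun j => d i j < D k.succ), yr.1 j }

/-- Integer feasible solutions of formulation `(CP2)`. -/
def CP2Int {N M K : ℕ} (d : Fin N → Fin M → ℝ) (D : Fin (K + 1) → ℝ) (p : ℕ)
    (y : Fin M → ℝ) (r : ℤ) : Prop :=
  (∀ j, y j = 0 ∨ y j = 1) ∧ 0 ≤ r ∧ r ≤ (K : ℤ) ∧
    1 ≤ ∑ j, y j ∧ ∑ j, y j ≤ (p : ℝ) ∧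
    ∀ i : Fin N, ∀ k : Fin K, ActiveIdx d D i k →
      ((k : ℕ) + 1 : ℝ) ≤ (r : ℝ) +
        ((k : ℕ) + 1 : ℝ) * ∑ j ∈ univ.filter (fun j => d i j < D k.succ), y j

lemma Ordered.antitone {K : ℕ} {z : Fin K → ℝ} (hz : Ordered z) : Antitone z := by
  have key : ∀ (n : ℕ) (k : Fin K) (h : (k : ℕ) + n < K), z ⟨(k : ℕ) + n, h⟩ ≤ z k := by
    intro n k
    induction n with
    | zero => intro _; exact le_rfl
    | succ n ih =>
      intro h
      exact (hz ⟨(k : ℕ) + n, by omega⟩ h).trans (ih (by omega))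
  intro k l hkl
  obtain ⟨n, hn⟩ := Nat.exists_eq_add_of_le (Fin.le_def.mp hkl)
  have hl : l = ⟨(k : ℕ) + n, hn ▸ l.isLt⟩ := Fin.ext hn
  rw [hl]
  exact key n k _

lemma Ordered.succ_mul_le_sum {K : ℕ} {z : Fin K → ℝ} (hz : Ordered z) (h0 : ∀ k, 0 ≤ z k)
    (k : Fin K) : ((k : ℕ) + 1 : ℝ) * z k ≤ ∑ l, z l := by
  calc ((k : ℕ) + 1 : ℝ) * z k = ∑ _l ∈ Iic k, z k := by simp
    _ ≤ ∑ l ∈ Iic k, z l := sum_le_sum fun l hl => hz.antitone (mem_Iic.mp hl)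
    _ ≤ ∑ l, z l := sum_le_sum_of_subset_of_nonneg (subset_univ _) fun l _ _ => h0 l

/-- from an integer feasible solution `(y, z)` of `(CP1)` to an
integer feasible solution `(y, r)` of `(CP2)` with `r = ∑_{k=1}^K z^k`. -/
theorem stmt6 {N M K : ℕ} (hN : 0 < N) (hM : 0 < M)
    (d : Fin N → Fin M → ℝ) (p : ℕ) (hp1 : 1 ≤ p) (hpM : p ≤ M)
    (D : Fin (K + 1) → ℝ) (hD : StrictMono D)
    (hrange : Set.range D = { x : ℝ | ∃ i j, d i j = x })
    (y : Fin M → ℝ) (z : Fin K → ℝ) (hfeas : (y, z) ∈ CP1Int d D p)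
    (r : ℤ) (hr : (r : ℝ) = ∑ k, z k) :
    CP2Int d D p y r := by
  obtain ⟨hy, hz, hy1, hyp, hord, hcov⟩ := hfeas
  dsimp only at hy hz hy1 hyp hord hcov
  have h0 : ∀ k, 0 ≤ z k := fun k => by rcases hz k with h | h <;> simp [h]
  have h1 : ∀ k, z k ≤ 1 := fun k => by rcases hz k with h | h <;> simp [h]
  have hr0 : (0 : ℝ) ≤ r := hr ▸ sum_nonneg fun k _ => h0 k
  have hrK : (r : ℝ) ≤ (K : ℝ) := by
    rw [hr]
    exact (sum_le_sum fun k _ => h1 k).trans (by simp)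
  refine ⟨hy, by exact_mod_cast hr0, by exact_mod_cast hrK, hy1, hyp, fun i k hk => ?_⟩
  have hk0 : (0 : ℝ) ≤ (k : ℕ) + 1 := by positivity
  have hmul := mul_le_mul_of_nonneg_left (hcov i k hk) hk0
  have hsum := hord.succ_mul_le_sum h0 k
  rw [mul_one, mul_add] at hmul
  linarith
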